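/- Let H be a free group of rank n > 1, let G be the free group on generators a_1,…,a_m, and let φ : G → H be a homomorphism with remnant whose remnant length is at least l ≥ 1. Then the upper asymptotic density of the image subgroup φ(G) in H satisfies limsup_{p→∞} |φ(G) ∩ H_p| / |H_p| ≤ 16·n·(2n−1)^{−⌈l/2⌉}. -/

import Mathlib

/-- Half the total cancellation in the product `x * y` of elements of a free group:
`(|x| + |y| - |x*y|) / 2`. -/
def cancelLen {β : Type} [DecidableEq β] (x y : FreeGroup β) : ℕ :=
  (FreeGroup.norm x + FreeGroup.norm y - FreeGroup.norm (x * y)) / 2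

/-- `x` or `x⁻¹`, according to the sign `b` (`true` = exponent `1`, `false` = exponent `-1`). -/
def pmPow {β : Type} [DecidableEq β] (b : Bool) (x : FreeGroup β) : FreeGroup β :=
  if b then x else x⁻¹

/-- The left cancellation `L_i` of the `i`-th entry of the tuple `t`: the maximum of
`(|h_j^α| + |h_i| - |h_j^α * h_i|)/2` over pairs `(j, α)` with `(j, α) ≠ (i, -1)`. -/
def leftCancel {β : Type} [DecidableEq β] {N : ℕ} (t : Fin N → FreeGroup β) (i : Fin N) : ℕ :=
  Finset.univ.sup fun p : Fin N × Bool =>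
    if p.1 = i ∧ p.2 = false then 0 else cancelLen (pmPow p.2 (t p.1)) (t i)

/-- The right cancellation `R_i` of the `i`-th entry of the tuple `t`: the maximum of
`(|h_i| + |h_k^β| - |h_i * h_k^β|)/2` over pairs `(k, β)` with `(k, β) ≠ (i, -1)`. -/
def rightCancel {β : Type} [DecidableEq β] {N : ℕ} (t : Fin N → FreeGroup β) (i : Fin N) : ℕ :=
  Finset.univ.sup fun p : Fin N × Bool =>
    if p.1 = i ∧ p.2 = false then 0 else cancelLen (t i) (pmPow p.2 (t p.1))

/-- The remnant length `|Rem_t h_i| = |h_i| - L_i - R_i` of the `i`-th entry of `t`. -/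
def remLen {β : Type} [DecidableEq β] {N : ℕ} (t : Fin N → FreeGroup β) (i : Fin N) : ℕ :=
  FreeGroup.norm (t i) - leftCancel t i - rightCancel t i

/-- A tuple has remnant if `|h_i| - L_i - R_i ≥ 1` for all `i`. -/
def HasRemnant {β : Type} [DecidableEq β] {N : ℕ} (t : Fin N → FreeGroup β) : Prop :=
  ∀ i, 1 ≤ remLen t i

/-- The number of elements of the free group of rank `n` of word length at most `p`,
i.e. `|H_p|`. -/
noncomputable def ballCount (n p : ℕ) : ℕ :=
  Nat.card {w : FreeGroup (Fin n) // FreeGroup.norm w ≤ p}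

/-!
A nontrivial element of `φ(G)` is the image of a nonempty reduced word, and the remnant of the image
of each letter survives all cancellation in the product of these images; hence the element has
length at least `l`. So distinct elements of `φ(G)` are at distance at least `l > 2k` in the Cayley
tree of `H`, where `k = ⌈l/2⌉ - 1`. Deleting the last `k` letters of a reduced word moves it by at
most `k`, so it is injective on `φ(G)`, and `|φ(G) ∩ H_{p+k}| ≤ |H_p| ≤ (2n-1)^{-k} |H_{p+k}|`.
-/

open FreeGroup
open Filter (atTop limsup)

section GromovProduct

/-- The length of the longest common prefix of two lists. -/
def commonPrefixLength {γ : Type*} [DecidableEq γ] : List γ → List γ → ℕ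
  | x :: A, y :: B => if x = y then commonPrefixLength A B + 1 else 0
  | _, _ => 0

lemma min_commonPrefixLength_le {γ : Type*} [DecidableEq γ] :
    ∀ A B C : List γ,
      min (commonPrefixLength A B) (commonPrefixLength B C) ≤ commonPrefixLength A C
  | [], _, _ => by simp [commonPrefixLength]
  | _ :: _, [], _ => by simp [commonPrefixLength]
  | _ :: _, _ :: _, [] => by simp [commonPrefixLength]
  | x :: A, y :: B, z :: C => by
    have ih := min_commonPrefixLength_le A B C
    simp only [commonPrefixLength]
    split_ifs <;> first | omega | simp_all

lemma isReduced_invRev {β : Type*} {L : List (β × Bool)} (hL : FreeGroup.IsReduced L) :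
    FreeGroup.IsReduced (invRev L) := by
  classical
  rw [isReduced_iff_reduce_eq, reduce_invRev, hL.reduce_eq]

lemma isReduced_invRev_cons_append_cons {β : Type*} {x y : β × Bool} {A B : List (β × Bool)}
    (hA : FreeGroup.IsReduced (x :: A)) (hB : FreeGroup.IsReduced (y :: B)) (hxy : x ≠ y) :
    FreeGroup.IsReduced (invRev (x :: A) ++ y :: B) := by
  refine List.isChain_append.2 ⟨isReduced_invRev hA, hB, fun a ha b hb hab => ?_⟩
  obtain rfl : (x.1, !x.2) = a := by simpa [invRev] using ha
  obtain rfl : y = b := by simpa using hb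
  exact Bool.not_eq.2 fun h => hxy (Prod.ext hab h)

variable {β : Type*} [DecidableEq β]

lemma mk_cons_eq_mul {α : Type*} (x : α × Bool) (L : List (α × Bool)) :
    mk (x :: L) = mk [x] * mk L := by
  rw [mul_mk, List.singleton_append]

lemma norm_mk_of_isReduced {L : List (β × Bool)} (hL : FreeGroup.IsReduced L) :
    FreeGroup.norm (mk L) = L.length := by
  rw [FreeGroup.norm, toWord_mk, hL.reduce_eq]

lemma norm_inv_mk_mul_mk_add : ∀ {A B : List (β × Bool)},
    FreeGroup.IsReduced A → FreeGroup.IsReduced B →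
    FreeGroup.norm ((mk A)⁻¹ * mk B) + 2 * commonPrefixLength A B
        = A.length + B.length
  | [], B, _, hB => by
    simp [commonPrefixLength, ← one_eq_mk, norm_mk_of_isReduced hB]
  | x :: A, [], hA, _ => by
    simp [commonPrefixLength, ← one_eq_mk, norm_mk_of_isReduced hA, -inv_mk]
  | x :: A, y :: B, hA, hB => by
    by_cases hxy : x = y
    · subst hxy
      have ih := norm_inv_mk_mul_mk_add (A := A) (B := B) hA.tail hB.tail
      have hcancel : (mk (x :: A))⁻¹ * mk (x :: B) = (mk A)⁻¹ * mk B := by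
        rw [mk_cons_eq_mul x A, mk_cons_eq_mul x B]
        group
      simp only [hcancel, commonPrefixLength, if_true, List.length_cons]
      omega
    · rw [inv_mk, mul_mk, norm_mk_of_isReduced (isReduced_invRev_cons_append_cons hA hB hxy)]
      simp [commonPrefixLength, hxy]

/-- The Gromov product of two vertices of the Cayley tree, based at the identity: the length of the
common prefix of their reduced words. It is half of what cancels in `u⁻¹ * v`. -/
def gromovProduct (u v : FreeGroup β) : ℕ := commonPrefixLength u.toWord v.toWord

lemma norm_inv_mul_add_two_mul_gromovProduct (u v : FreeGroup β) :
    FreeGroup.norm (u⁻¹ * v) + 2 * gromovProduct u v = FreeGroup.norm u + FreeGroup.norm v := by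
  simpa only [mk_toWord] using!
    norm_inv_mk_mul_mk_add (isReduced_toWord (x := u)) (isReduced_toWord (x := v))

lemma min_gromovProduct_le (u v w : FreeGroup β) :
    min (gromovProduct u v) (gromovProduct v w) ≤ gromovProduct u w :=
  min_commonPrefixLength_le _ _ _

lemma gromovProduct_comm (u v : FreeGroup β) : gromovProduct u v = gromovProduct v u := by
  have huv := norm_inv_mul_add_two_mul_gromovProduct u v
  have hvu := norm_inv_mul_add_two_mul_gromovProduct v u
  rw [← norm_inv_eq, mul_inv_rev, inv_inv] at hvu
  omega

lemma gromovProduct_le_norm_left (u v : FreeGroup β) : gromovProduct u v ≤ FreeGroup.norm u := by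
  have huv := norm_inv_mul_add_two_mul_gromovProduct u v
  have htri : FreeGroup.norm v ≤ FreeGroup.norm u + FreeGroup.norm (u⁻¹ * v) := by
    simpa using norm_mul_le u (u⁻¹ * v)
  omega

lemma gromovProduct_self (u : FreeGroup β) : gromovProduct u u = FreeGroup.norm u := by
  have h := norm_inv_mul_add_two_mul_gromovProduct u u
  rw [inv_mul_cancel, FreeGroup.norm_one] at h
  omega

lemma gromovProduct_mul_left_add (u v : FreeGroup β) :
    gromovProduct (u * v) u + gromovProduct u⁻¹ v = FreeGroup.norm u := by
  have h := norm_inv_mul_add_two_mul_gromovProduct (u * v) u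
  have h' := norm_inv_mul_add_two_mul_gromovProduct u⁻¹ v
  rw [mul_inv_rev, inv_mul_cancel_right, norm_inv_eq] at h
  rw [inv_inv, norm_inv_eq] at h'
  omega

lemma cancelLen_eq_gromovProduct {β : Type} [DecidableEq β] (u v : FreeGroup β) :
    cancelLen u v = gromovProduct u⁻¹ v := by
  have h := norm_inv_mul_add_two_mul_gromovProduct u⁻¹ v
  rw [inv_inv, norm_inv_eq] at h
  unfold cancelLen
  omega

end GromovProduct

section Remnant

lemma map_mk_inv_letter {α β : Type*} (φ : FreeGroup α →* FreeGroup β) (x : α × Bool) :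
    φ (mk [(x.1, !x.2)]) = (φ (mk [x]))⁻¹ := by
  rw [← _root_.map_inv, inv_mk]
  rfl

variable {α β : Type*} [DecidableEq β]

/-- Remnant for a homomorphism on a free group of arbitrary rank. A letter `x : α × Bool` stands for
a generator or its inverse, and `(x.1, !x.2)` for the inverse letter. `c x` bounds the length of the
initial segment of `φ x` that can cancel in a product `φ y⁻¹ * φ x` with `y ≠ x`, and at least `l`
letters of `φ x` are left once both of its ends are removed. For a tuple as in `remLen`, `c` is
`L_i` at `a_i` and `R_i` at `a_i⁻¹`. -/
structure RemnantBound (φ : FreeGroup α →* FreeGroup β) (c : α × Bool → ℕ) (l : ℕ) : Prop where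
  gromovProduct_le : ∀ x y, x ≠ y → gromovProduct (φ (mk [x])) (φ (mk [y])) ≤ c x
  le_norm : ∀ x, c x + c (x.1, !x.2) + l ≤ FreeGroup.norm (φ (mk [x]))

namespace RemnantBound

variable {φ : FreeGroup α →* FreeGroup β} {c : α × Bool → ℕ} {l : ℕ}

lemma gromovProduct_le_of_lt (h : RemnantBound φ c l) {x y : α × Bool} {w : FreeGroup β}
    (hy : c y < gromovProduct w (φ (FreeGroup.mk [y]))) (hxy : x ≠ y) :
    gromovProduct (φ (FreeGroup.mk [x])) w ≤ c x := by
  have htree := min_gromovProduct_le (φ (FreeGroup.mk [x])) w (φ (FreeGroup.mk [y]))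
  have hx := h.gromovProduct_le x y hxy
  have hy' := h.gromovProduct_le y x hxy.symm
  rw [gromovProduct_comm] at hy'
  omega

lemma norm_le_gromovProduct_add (h : RemnantBound φ c l) (hl : 1 ≤ l) :
    ∀ (x : α × Bool) (L : List (α × Bool)), FreeGroup.IsReduced (x :: L) →
      FreeGroup.norm (φ (FreeGroup.mk [x]))
        ≤ gromovProduct (φ (FreeGroup.mk (x :: L))) (φ (FreeGroup.mk [x])) + c (x.1, !x.2)
  | x, [], _ => by
    rw [gromovProduct_self]
    exact Nat.le_add_right _ _
  | x, y :: L, hred => by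
    have hne : (x.1, !x.2) ≠ y := by
      rintro rfl
      simp [FreeGroup.IsReduced] at hred
    have hprefix : c y < gromovProduct (φ (FreeGroup.mk (y :: L))) (φ (FreeGroup.mk [y])) := by
      have ih := norm_le_gromovProduct_add h hl y L hred.tail
      have hy := h.le_norm y
      omega
    have hcancel :
        gromovProduct (φ (FreeGroup.mk [x]))⁻¹ (φ (FreeGroup.mk (y :: L))) ≤ c (x.1, !x.2) := by
      rw [← map_mk_inv_letter]
      exact h.gromovProduct_le_of_lt hprefix hne
    rw [mk_cons_eq_mul x (y :: L), _root_.map_mul]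
    have hsplit := gromovProduct_mul_left_add (φ (FreeGroup.mk [x])) (φ (FreeGroup.mk (y :: L)))
    omega

lemma le_norm_map (h : RemnantBound φ c l) (hl : 1 ≤ l) {g : FreeGroup α} (hg : g ≠ 1) :
    l ≤ FreeGroup.norm (φ g) := by
  classical
  obtain ⟨x, L, hxL⟩ := List.exists_cons_of_ne_nil (mt toWord_eq_nil_iff.1 hg)
  have hprefix := h.norm_le_gromovProduct_add hl x L (hxL ▸ isReduced_toWord)
  rw [← hxL, mk_toWord] at hprefix
  have hle := gromovProduct_le_norm_left (φ g) (φ (FreeGroup.mk [x]))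
  have hx := h.le_norm x
  omega

lemma pairwise_range (h : RemnantBound φ c l) (hl : 1 ≤ l) :
    (φ.range : Set (FreeGroup β)).Pairwise fun u v => l ≤ FreeGroup.norm (u⁻¹ * v) := by
  rintro _ ⟨a, rfl⟩ _ ⟨b, rfl⟩ hab
  rw [← _root_.map_inv, ← _root_.map_mul]
  refine h.le_norm_map hl fun hg => hab ?_
  rw [inv_mul_eq_one.1 hg]

end RemnantBound

lemma cancelLen_le_leftCancel {β : Type} [DecidableEq β] {N : ℕ} (t : Fin N → FreeGroup β)
    {i j : Fin N} {b : Bool} (h : (j, b) ≠ (i, false)) :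
    cancelLen (pmPow b (t j)) (t i) ≤ leftCancel t i := by
  have hle := Finset.le_sup (f := fun p : Fin N × Bool =>
    if p.1 = i ∧ p.2 = false then 0 else cancelLen (pmPow p.2 (t p.1)) (t i))
    (Finset.mem_univ (j, b))
  rwa [if_neg (by simpa using h)] at hle

lemma cancelLen_le_rightCancel {β : Type} [DecidableEq β] {N : ℕ} (t : Fin N → FreeGroup β)
    {i j : Fin N} {b : Bool} (h : (j, b) ≠ (i, false)) :
    cancelLen (t i) (pmPow b (t j)) ≤ rightCancel t i := by
  have hle := Finset.le_sup (f := fun p : Fin N × Bool =>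
    if p.1 = i ∧ p.2 = false then 0 else cancelLen (t i) (pmPow p.2 (t p.1)))
    (Finset.mem_univ (j, b))
  rwa [if_neg (by simpa using h)] at hle

lemma map_mk_letter_eq_pmPow {β : Type} [DecidableEq β] (φ : FreeGroup α →* FreeGroup β)
    (i : α) (b : Bool) : φ (mk [(i, b)]) = pmPow b (φ (of i)) := by
  cases b
  · exact map_mk_inv_letter φ (i, true)
  · rfl

/-- What can cancel at the beginning of the value of the letter `x`: `L_i` for the letter `a_i`, and
`R_i` for `a_i⁻¹`, whose value begins with the inverse of the end of `t i`. -/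
def letterCancel {β : Type} [DecidableEq β] {N : ℕ} (t : Fin N → FreeGroup β)
    (x : Fin N × Bool) : ℕ :=
  if x.2 then leftCancel t x.1 else rightCancel t x.1

lemma remnantBound_of_le_remLen {β : Type} [DecidableEq β] {m l : ℕ}
    {φ : FreeGroup (Fin m) →* FreeGroup β} (hl : 1 ≤ l)
    (hrem : ∀ i, l ≤ remLen (fun j => φ (of j)) i) :
    RemnantBound φ (letterCancel fun j => φ (of j)) l where
  gromovProduct_le := by
    rintro ⟨i, _ | _⟩ ⟨j, b⟩ hne
    · have hle := cancelLen_le_rightCancel (fun j => φ (of j)) hne.symm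
      rwa [cancelLen_eq_gromovProduct, ← map_mk_letter_eq_pmPow, of,
        ← map_mk_inv_letter φ (i, true)] at hle
    · have hne' : (j, !b) ≠ (i, false) := by grind
      have hle := cancelLen_le_leftCancel (fun j => φ (of j)) hne'
      rwa [cancelLen_eq_gromovProduct, ← map_mk_letter_eq_pmPow, map_mk_inv_letter φ (j, b),
        inv_inv, gromovProduct_comm] at hle
  le_norm := by
    rintro ⟨i, b⟩
    have hi := hrem i
    simp only [remLen] at hi
    cases b <;> simp only [map_mk_letter_eq_pmPow, letterCancel, pmPow, norm_inv_eq, Bool.not_true,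
      Bool.not_false, if_true, Bool.false_eq_true, if_false] <;> omega

end Remnant

section Ball

variable {β : Type*}

lemma le_ncard_setOf_isReduced_cons [Fintype β] {L : List (β × Bool)} (hL : FreeGroup.IsReduced L) :
    2 * Fintype.card β - 1 ≤ {x | FreeGroup.IsReduced (x :: L)}.ncard := by
  have hcard : Nat.card (β × Bool) = 2 * Fintype.card β := by simp [mul_comm]
  rcases L with _ | ⟨y, L⟩
  · simp only [IsReduced.singleton, Set.ofPred_true, Set.ncard_univ, hcard]
    exact Nat.sub_le _ _
  · calc 2 * Fintype.card β - 1 = ({(y.1, !y.2)}ᶜ : Set (β × Bool)).ncard := by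
          rw [Set.ncard_compl, Set.ncard_singleton, hcard]
      _ ≤ {x | FreeGroup.IsReduced (x :: y :: L)}.ncard := by
          refine Set.ncard_le_ncard fun x hx => List.isChain_cons_cons.2 ⟨fun hxy => ?_, hL⟩
          exact by_contra fun h => hx (Prod.ext hxy (Bool.eq_not.2 h))

variable [DecidableEq β]

variable (β) in
/-- The ball `H_p` of radius `p` about the identity in the word metric of the free group on `β`. -/
def wordBall (p : ℕ) : Set (FreeGroup β) := {w | FreeGroup.norm w ≤ p}

lemma finite_wordBall [Finite β] (p : ℕ) : (wordBall β p).Finite :=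
  (List.finite_length_le (β × Bool) p).preimage toWord_injective.injOn

lemma ncard_wordBall_pos [Finite β] (p : ℕ) : 0 < (wordBall β p).ncard :=
  (Set.ncard_pos (finite_wordBall p)).2 ⟨1, by simp [wordBall]⟩

lemma mul_ncard_wordBall_le [Fintype β] (p : ℕ) :
    (2 * Fintype.card β - 1) * (wordBall β p).ncard ≤ (wordBall β (p + 1)).ncard := by
  have : Fintype (wordBall β p) := (finite_wordBall p).fintype
  have : Finite (wordBall β (p + 1)) := finite_wordBall _
  let prepend : (Σ u : wordBall β p, {x | FreeGroup.IsReduced (x :: u.1.toWord)}) →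
      wordBall β (p + 1) := fun a => ⟨mk (a.2.1 :: a.1.1.toWord),
        norm_mk_le.trans (Nat.succ_le_succ a.1.2)⟩
  have hprepend : Function.Injective prepend := by
    rintro ⟨u, x, hx⟩ ⟨v, y, hy⟩ h
    have hword := congrArg (fun w => w.1.toWord) h
    simp only [prepend, toWord_mk] at hword
    rw [hx.reduce_eq, hy.reduce_eq, List.cons.injEq, toWord_inj, SetCoe.ext_iff] at hword
    obtain ⟨rfl, rfl⟩ := hword
    rfl
  calc (2 * Fintype.card β - 1) * (wordBall β p).ncard
      = ∑ _u : wordBall β p, (2 * Fintype.card β - 1) := by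
        rw [Finset.sum_const, Finset.card_univ, smul_eq_mul, mul_comm, Set.fintypeCard_eq_ncard]
    _ ≤ ∑ u : wordBall β p, {x | FreeGroup.IsReduced (x :: u.1.toWord)}.ncard :=
        Finset.sum_le_sum fun u _ => le_ncard_setOf_isReduced_cons isReduced_toWord
    _ = Nat.card (Σ u : wordBall β p, {x | FreeGroup.IsReduced (x :: u.1.toWord)}) :=
        Nat.card_sigma.symm
    _ ≤ (wordBall β (p + 1)).ncard := Nat.card_le_card_of_injective prepend hprepend

lemma pow_mul_ncard_wordBall_le [Fintype β] (p k : ℕ) :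
    (2 * Fintype.card β - 1) ^ k * (wordBall β p).ncard ≤ (wordBall β (p + k)).ncard := by
  induction k with
  | zero => simp
  | succ k ih =>
    rw [pow_succ', mul_assoc]
    exact (Nat.mul_le_mul_left _ ih).trans (mul_ncard_wordBall_le (p + k))

end Ball

section SeparatedSet

variable {β : Type*} [DecidableEq β]

/-- The group element obtained from the reduced word of `w` by deleting its last `k` letters. -/
def dropLastLetters (k : ℕ) (w : FreeGroup β) : FreeGroup β := mk (w.toWord.rdrop k)

lemma norm_dropLastLetters_le (k : ℕ) (w : FreeGroup β) :
    FreeGroup.norm (dropLastLetters k w) ≤ FreeGroup.norm w - k := by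
  refine norm_mk_le.trans ?_
  rw [List.rdrop, List.length_take, FreeGroup.norm]
  exact min_le_left _ _

lemma norm_inv_dropLastLetters_mul_le (k : ℕ) (w : FreeGroup β) :
    FreeGroup.norm ((dropLastLetters k w)⁻¹ * w) ≤ k := by
  have hsplit : (dropLastLetters k w)⁻¹ * w = mk (w.toWord.rtake k) := by
    rw [inv_mul_eq_iff_eq_mul, dropLastLetters, mul_mk, List.rdrop, List.rtake,
      List.take_append_drop, mk_toWord]
  rw [hsplit]
  refine norm_mk_le.trans ?_
  rw [List.rtake, List.length_drop]
  omega

variable {K : Set (FreeGroup β)} {k : ℕ}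

lemma injOn_dropLastLetters (hK : K.Pairwise fun u v => 2 * k < FreeGroup.norm (u⁻¹ * v)) :
    K.InjOn (dropLastLetters k) := by
  refine fun u hu v hv huv => by_contra fun hne => (hK hu hv hne).not_ge ?_
  set t := dropLastLetters k u
  calc FreeGroup.norm (u⁻¹ * v) = FreeGroup.norm ((t⁻¹ * u)⁻¹ * (t⁻¹ * v)) := by
        congr 1
        group
    _ ≤ FreeGroup.norm (t⁻¹ * u) + FreeGroup.norm (t⁻¹ * v) := by
        simpa only [norm_inv_eq] using norm_mul_le (t⁻¹ * u)⁻¹ (t⁻¹ * v)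
    _ ≤ k + k := Nat.add_le_add (norm_inv_dropLastLetters_mul_le k u)
        (huv ▸ norm_inv_dropLastLetters_mul_le k v)
    _ = 2 * k := (two_mul k).symm

lemma ncard_inter_wordBall_add_le [Finite β]
    (hK : K.Pairwise fun u v => 2 * k < FreeGroup.norm (u⁻¹ * v)) (p : ℕ) :
    (K ∩ wordBall β (p + k)).ncard ≤ (wordBall β p).ncard := by
  refine Set.ncard_le_ncard_of_injOn (dropLastLetters k) (fun w hw => ?_)
    ((injOn_dropLastLetters hK).mono Set.inter_subset_left) (finite_wordBall p)
  exact (norm_dropLastLetters_le k w).trans (Nat.sub_le_iff_le_add.2 hw.2)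

theorem limsup_density_le_of_pairwise [Fintype β] [Nonempty β]
    (hK : K.Pairwise fun u v => 2 * k < FreeGroup.norm (u⁻¹ * v)) :
    limsup (fun p => ((K ∩ wordBall β p).ncard : ℝ) / (wordBall β p).ncard) atTop
      ≤ ((2 * Fintype.card β - 1 : ℝ) ^ k)⁻¹ := by
  have hcard : 1 ≤ Fintype.card β := Fintype.card_pos
  have hq : (0 : ℝ) < 2 * Fintype.card β - 1 := by
    have : (1 : ℝ) ≤ Fintype.card β := by exact_mod_cast hcard
    linarith
  refine Filter.limsup_le_of_le
    (Filter.isCoboundedUnder_le_of_le atTop (x := 0) fun p => by positivity) ?_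
  filter_upwards [Filter.eventually_ge_atTop k] with p hp
  obtain ⟨r, rfl⟩ := Nat.exists_eq_add_of_le' hp
  have hsep : ((K ∩ wordBall β (r + k)).ncard : ℝ) ≤ (wordBall β r).ncard := by
    exact_mod_cast ncard_inter_wordBall_add_le hK r
  have hgrowth : (2 * Fintype.card β - 1 : ℝ) ^ k * (wordBall β r).ncard
      ≤ (wordBall β (r + k)).ncard := by
    have h := pow_mul_ncard_wordBall_le (β := β) r k
    rify [(by omega : 1 ≤ 2 * Fintype.card β)] at h
    exact h
  have hball : (0 : ℝ) < (wordBall β (r + k)).ncard := by exact_mod_cast ncard_wordBall_pos (r + k)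
  rw [div_le_iff₀ hball, inv_mul_eq_div, le_div_iff₀' (pow_pos hq k)]
  exact (mul_le_mul_of_nonneg_left hsep (pow_pos hq k).le).trans hgrowth

end SeparatedSet

theorem image_density_le_of_remnant_general {α β : Type*} [Fintype β] [DecidableEq β] [Nonempty β]
    {φ : FreeGroup α →* FreeGroup β} {c : α × Bool → ℕ} {l : ℕ} (hl : 1 ≤ l)
    (hφ : RemnantBound φ c l) :
    limsup (fun p => ((φ.range ∩ wordBall β p : Set (FreeGroup β)).ncard : ℝ) /
        (wordBall β p).ncard) atTop
      ≤ ((2 * Fintype.card β - 1 : ℝ) ^ ((l - 1) / 2))⁻¹ :=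
  limsup_density_le_of_pairwise <| (hφ.pairwise_range hl).mono' fun _ _ h => by omega

lemma inv_pow_le_mul_zpow_neg {n j k : ℕ} (hn : 1 ≤ n) (hjk : j ≤ k + 1) :
    ((2 * n - 1 : ℝ) ^ k)⁻¹ ≤ 16 * n * (2 * n - 1 : ℝ) ^ (-(j : ℤ)) := by
  have hn' : (1 : ℝ) ≤ n := by exact_mod_cast hn
  set q : ℝ := 2 * n - 1
  have hq1 : 1 ≤ q := by linarith
  rw [zpow_neg, zpow_natCast, ← div_eq_mul_inv, le_div_iff₀ (by positivity),
    inv_mul_le_iff₀ (by positivity)]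
  calc q ^ j ≤ q ^ (k + 1) := pow_le_pow_right₀ hq1 hjk
    _ = q ^ k * q := pow_succ q k
    _ ≤ q ^ k * (16 * n) := by gcongr; linarith

/-- Let `H` be the free group of rank `n > 1` and let
`φ : G → H` be a homomorphism from the free group on `m` generators with remnant length
at least `l ≥ 1`. Then the upper asymptotic density of the image subgroup `φ(G)` in `H`
is at most `16 * n * (2n - 1)^(-⌈l/2⌉)`. -/
theorem image_density_le_of_remnant {m n l : ℕ} (hn : 1 < n) (hl : 1 ≤ l)
    (φ : FreeGroup (Fin m) →* FreeGroup (Fin n))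
    (hrem : ∀ i, l ≤ remLen (fun j : Fin m => φ (FreeGroup.of j)) i) :
    Filter.limsup (fun p : ℕ =>
        (Nat.card {w : FreeGroup (Fin n) // w ∈ φ.range ∧ FreeGroup.norm w ≤ p} : ℝ) /
          (ballCount n p : ℝ))
      Filter.atTop
      ≤ 16 * n * ((2 * n - 1 : ℝ)) ^ (-(((l + 1) / 2 : ℕ) : ℤ)) := by
  have : Nonempty (Fin n) := ⟨⟨0, by omega⟩⟩
  have hdensity := image_density_le_of_remnant_general hl (remnantBound_of_le_remLen hl hrem)
  rw [Fintype.card_fin] at hdensity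
  exact hdensity.trans (inv_pow_le_mul_zpow_neg hn.le (by omega))
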